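/- arXiv:1808.06513 — 2 statements merged into one kernel-verified Lean document; each statement's English description precedes it below -/
import Mathlib

section
/- Let q ≥ 5 be an odd integer. For u₁,…,u_q ∈ Z define v_{q−1} = Σ_{j=1}^{q−1} (2j−q) u_j and v_q = u_q − Σ_{j=1}^{q−2} ((−q+2+2j)/(q−2)) u_j. Then the identity P_q(u₁,…,u_q) = Q(v_{q−1}, v_q) + (q/(q−2)) P_{q−2}(u₁,…,u_{q−2}) holds for all u₁,…,u_q ∈ Z. -/
/- `Z = ℝ^m`, `T = ℝ^ℓ`, `Q : Z × Z → T` bilinear skew-symmetric.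
For `q ≥ 3`, `P_q(u₁,…,u_q) = Σ_{1≤j<k≤q} (q − 2(k−j)) Q(u_j,u_k)`
(here `u : Fin q → Z`, with `u i` playing the role of `u_{i+1}`). -/

noncomputable section

abbrev ZS (m : ℕ) := EuclideanSpace ℝ (Fin m)

abbrev TS (l : ℕ) := EuclideanSpace ℝ (Fin l)

/-- The map `P_q(u₁,…,u_q) = Σ_{1≤j<k≤q} (q − 2(k−j)) Q(u_j,u_k)`. -/
def Pfun {m l : ℕ} (Q : ZS m →ₗ[ℝ] ZS m →ₗ[ℝ] TS l) (q : ℕ)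
    (u : Fin q → ZS m) : TS l :=
  ∑ jk ∈ Finset.univ.filter (fun jk : Fin q × Fin q => jk.1 < jk.2),
    ((q : ℝ) - 2 * (((jk.2 : ℕ) : ℝ) - ((jk.1 : ℕ) : ℝ))) • Q (u jk.1) (u jk.2)

/-!
Let `S_c(u) = ∑_{j<k} (c - 2(k-j)) Q(u_j, u_k)` and `L_a(u) = ∑_j (2j - a) u_j`, with indices
starting at `0`, so that `P_q` is `S_q` on `q` vectors. By bilinearity the last vector splits off,
`S_c(u₀, …, u_n) = S_c(u₀, …, u_{n-1}) + Q(L_{2n-c}(u₀, …, u_{n-1}), u_n)`. Since `Q` is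
alternating, `Q(L_a u, L_b u) = 2(b-a) ∑_{j<k} (k-j) Q(u_j, u_k)`, and hence
`c S_d(u) = d S_c(u) + Q(L_a u, L_b u)` whenever `c - d = a - b`. Splitting two vectors off `S_q`
and then trading `c = q` for `d = q - 2` gives the recursion, with
`v_{q-1} = L_{q-2}(u₀, …, u_{q-2})` and `v_q = u_{q-1} - L_{q-4}(u₀, …, u_{q-3}) / (q-2)`.
-/

section PairSums

variable {ι M : Type*} [AddCommMonoid M]

theorem sum_filter_lt_castSucc_add_last {n : ℕ} (f : Fin (n + 1) → Fin (n + 1) → M) :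
    ∑ p : Fin (n + 1) × Fin (n + 1) with p.1 < p.2, f p.1 p.2 =
      ∑ p : Fin n × Fin n with p.1 < p.2, f p.1.castSucc p.2.castSucc +
        ∑ j : Fin n, f j.castSucc (Fin.last n) := by
  simp [Finset.sum_filter, Fintype.sum_prod_type, Fin.sum_univ_castSucc, Finset.sum_add_distrib,
    (Fin.castSucc_lt_last _).not_gt]

theorem sum_sum_eq_sum_diag_add_sum_filter_lt [Fintype ι] [LinearOrder ι] (f : ι → ι → M) :
    ∑ i, ∑ j, f i j = ∑ i, f i i + ∑ p : ι × ι with p.1 < p.2, (f p.1 p.2 + f p.2 p.1) := by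
  have sum_gt_eq_sum_lt : ∑ p : ι × ι with p.2 < p.1, f p.1 p.2 =
      ∑ p : ι × ι with p.1 < p.2, f p.2 p.1 :=
    Finset.sum_equiv (Equiv.prodComm ι ι) (by simp) (by simp)
  have trichotomy (i j : ι) : f i j = (if i = j then f i j else 0) +
      ((if i < j then f i j else 0) + if j < i then f i j else 0) := by
    rcases lt_trichotomy i j with h | rfl | h
    · simp [h, h.ne, h.not_gt]
    · simp
    · simp [h, h.ne', h.not_gt]
  rw [Finset.sum_add_distrib, ← sum_gt_eq_sum_lt, Finset.sum_filter, Finset.sum_filter,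
    Fintype.sum_prod_type, Fintype.sum_prod_type]
  simp_rw [← Finset.sum_add_distrib]
  refine Finset.sum_congr rfl fun i _ => ?_
  rw [Finset.sum_congr rfl fun j _ => trichotomy i j]
  simp [Finset.sum_add_distrib]

end PairSums

section GapSums

variable {K V W : Type*} [CommRing K] [AddCommGroup V] [Module K V] [AddCommGroup W] [Module K W]

theorem isAlt_of_forall_eq_neg (h2 : IsUnit (2 : K)) {Q : V →ₗ[K] V →ₗ[K] W}
    (hskew : ∀ x y, Q x y = -Q y x) : Q.IsAlt := fun x => by
  rw [← h2.smul_eq_zero, two_smul]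
  exact eq_neg_iff_add_eq_zero.mp (hskew x x)

theorem isAlt_apply_sum_sum {ι : Type*} [Fintype ι] [LinearOrder ι] {Q : V →ₗ[K] V →ₗ[K] W}
    (hQ : Q.IsAlt) (a b : ι → K) (u : ι → V) :
    Q (∑ j, a j • u j) (∑ j, b j • u j) =
      ∑ p : ι × ι with p.1 < p.2, (a p.1 * b p.2 - a p.2 * b p.1) • Q (u p.1) (u p.2) := by
  have expand : Q (∑ j, a j • u j) (∑ j, b j • u j) =
      ∑ j, ∑ k, (a j * b k) • Q (u j) (u k) := by
    rw [LinearMap.map_sum₂]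
    simp only [map_sum, map_smul, LinearMap.smul_apply, smul_smul, mul_comm (b _)]
  rw [expand, sum_sum_eq_sum_diag_add_sum_filter_lt]
  simp only [hQ.self_eq_zero, smul_zero, Finset.sum_const_zero, zero_add]
  refine Finset.sum_congr rfl fun p _ => ?_
  rw [← hQ.neg (u p.1) (u p.2), smul_neg, ← sub_eq_add_neg, ← sub_smul]

/-- The sum `∑_{j<k} (c - 2(k-j)) Q(u_j, u_k)`. For `n` vectors and `c = n` it is the paper's `P_n`;
the constant `c` is kept independent of `n` because removing a vector changes `n` only. -/
def gapSum (Q : V →ₗ[K] V →ₗ[K] W) (c : K) {n : ℕ} (u : Fin n → V) : W :=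
  ∑ p : Fin n × Fin n with p.1 < p.2,
    (c - 2 * (((p.2 : ℕ) : K) - ((p.1 : ℕ) : K))) • Q (u p.1) (u p.2)

/-- The combination `∑_j (2j - a) u_j`, with `j` counted from `0`. Both of the paper's vectors
`v_{q-1}` and `v_q` are built from such combinations. -/
def rampSum (a : K) {n : ℕ} (u : Fin n → V) : V :=
  ∑ j : Fin n, (2 * ((j : ℕ) : K) - a) • u j

theorem rampSum_eq_init_add_last (a : K) {n : ℕ} (u : Fin (n + 1) → V) :
    rampSum a u = rampSum a (Fin.init u) + (2 * n - a) • u (Fin.last n) := by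
  simp [rampSum, Fin.sum_univ_castSucc, Fin.init]

theorem gapSum_eq_init_add_last (Q : V →ₗ[K] V →ₗ[K] W) (c : K) {n : ℕ} (u : Fin (n + 1) → V) :
    gapSum Q c u =
      gapSum Q c (Fin.init u) + Q (rampSum (2 * n - c) (Fin.init u)) (u (Fin.last n)) := by
  have last_terms : ∑ j : Fin n, (c - 2 * ((n : K) - (j : ℕ))) • Q (u j.castSucc) (u (Fin.last n)) =
      Q (rampSum (2 * n - c) (Fin.init u)) (u (Fin.last n)) := by
    simp only [rampSum, Fin.init, map_sum, map_smul, LinearMap.sum_apply, LinearMap.smul_apply]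
    refine Finset.sum_congr rfl fun j _ => ?_
    congr 1
    ring
  rw [← last_terms]
  exact sum_filter_lt_castSucc_add_last fun j k =>
    (c - 2 * (((k : ℕ) : K) - ((j : ℕ) : K))) • Q (u j) (u k)

variable {Q : V →ₗ[K] V →ₗ[K] W}

theorem smul_gapSum_eq_smul_gapSum_add (hQ : Q.IsAlt) {a b c d : K} (h : c - d = a - b)
    {n : ℕ} (u : Fin n → V) :
    c • gapSum Q d u = d • gapSum Q c u + Q (rampSum a u) (rampSum b u) := by
  rw [rampSum, rampSum, isAlt_apply_sum_sum hQ, gapSum, gapSum, Finset.smul_sum, Finset.smul_sum,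
    ← Finset.sum_add_distrib]
  refine Finset.sum_congr rfl fun p _ => ?_
  rw [smul_smul, smul_smul, ← add_smul]
  congr 1
  linear_combination (-2 * (((p.2 : ℕ) : K) - ((p.1 : ℕ) : K))) * h

theorem sub_two_smul_gapSum (hQ : Q.IsAlt) (c : K) {n : ℕ} (u : Fin (n + 2) → V) :
    (c - 2) • gapSum Q c u =
      Q (rampSum (2 * (n + 1) - c) (Fin.init u))
        ((c - 2) • u (Fin.last (n + 1)) - rampSum (2 * n - c) (Fin.init (Fin.init u))) +
      c • gapSum Q (c - 2) (Fin.init (Fin.init u)) := by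
  set w := Fin.init (Fin.init u)
  set x := Fin.init u (Fin.last n)
  set y := u (Fin.last (n + 1))
  have peel : gapSum Q c u = gapSum Q c w + Q (rampSum (2 * n - c) w) x +
      Q (rampSum (2 * (n + 1) - c) (Fin.init u)) y := by
    rw [gapSum_eq_init_add_last, gapSum_eq_init_add_last, Nat.cast_add_one]
  have ramp_init : rampSum (2 * (n + 1) - c) (Fin.init u) =
      rampSum (2 * (n + 1) - c) w + (c - 2) • x := by
    rw [rampSum_eq_init_add_last]
    congr 2
    ring
  have trade : c • gapSum Q (c - 2) w = (c - 2) • gapSum Q c w +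
      Q (rampSum (2 * (n + 1) - c) w) (rampSum (2 * n - c) w) :=
    smul_gapSum_eq_smul_gapSum_add hQ (by ring) w
  rw [peel, trade, map_sub, map_smul, ramp_init, ← hQ.neg x]
  simp only [map_add, map_smul, LinearMap.add_apply, LinearMap.smul_apply]
  module

end GapSums

section Field

variable {K V W : Type*} [Field K] [AddCommGroup V] [Module K V] [AddCommGroup W] [Module K W]
  {Q : V →ₗ[K] V →ₗ[K] W}

theorem gapSum_eq_apply_rampSum_add (hQ : Q.IsAlt) {c : K} (hc : c ≠ 2) {n : ℕ}
    (u : Fin (n + 2) → V) :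
    gapSum Q c u =
      Q (rampSum (2 * (n + 1) - c) (Fin.init u))
        (u (Fin.last (n + 1)) - (c - 2)⁻¹ • rampSum (2 * n - c) (Fin.init (Fin.init u))) +
      (c / (c - 2)) • gapSum Q (c - 2) (Fin.init (Fin.init u)) := by
  have hc' : c - 2 ≠ 0 := sub_ne_zero.mpr hc
  rw [← inv_smul_smul₀ hc' (gapSum Q c u), sub_two_smul_gapSum hQ, smul_add, ← map_smul,
    smul_sub, inv_smul_smul₀ hc', smul_smul, inv_mul_eq_div]

theorem P_recursive_identity_general (hQ : Q.IsAlt) {q : ℕ} (hq : 2 ≤ q) (hq2 : (q : K) ≠ 2)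
    (u : Fin q → V) :
    gapSum Q (q : K) u =
      Q (∑ j : Fin (q - 1),
          (2 * (((j : ℕ) : K) + 1) - (q : K)) • u (Fin.castLE (by omega) j))
        (u ⟨q - 1, by omega⟩ -
          ∑ j : Fin (q - 2),
            ((-(q : K) + 2 + 2 * (((j : ℕ) : K) + 1)) / ((q : K) - 2)) •
              u (Fin.castLE (by omega) j))
      + ((q : K) / ((q : K) - 2)) •
          gapSum Q ((q - 2 : ℕ) : K) (fun j : Fin (q - 2) => u (Fin.castLE (by omega) j)) := by
  obtain ⟨n, rfl⟩ : ∃ n, q = n + 2 := ⟨q - 2, by omega⟩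
  set c : K := ((n + 2 : ℕ) : K) with hc
  have hn : (n : K) = c - 2 := by rw [hc, Nat.cast_add, Nat.cast_two, add_sub_cancel_right]
  have first_eq : rampSum (2 * (n + 1) - c) (Fin.init u) =
      ∑ j : Fin (n + 1), (2 * (((j : ℕ) : K) + 1) - c) • Fin.init u j := by
    refine Finset.sum_congr rfl fun j _ => ?_
    rw [hn]
    congr 1
    ring
  have second_eq : (c - 2)⁻¹ • rampSum (2 * n - c) (Fin.init (Fin.init u)) =
      ∑ j : Fin n,
        ((-c + 2 + 2 * (((j : ℕ) : K) + 1)) / (c - 2)) • Fin.init (Fin.init u) j := by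
    rw [rampSum, Finset.smul_sum]
    refine Finset.sum_congr rfl fun j _ => ?_
    rw [smul_smul, hn]
    congr 1
    ring
  have gap_eq : gapSum Q (c - 2) (Fin.init (Fin.init u)) =
      gapSum Q (n : K) (Fin.init (Fin.init u)) := by rw [hn]
  rw [gapSum_eq_apply_rampSum_add hQ hq2, first_eq, second_eq, gap_eq]
  rfl

end Field

/-- **Recursive identity for `P_q`, `q ≥ 5` odd:** with
`v_{q−1} = Σ_{j=1}^{q−1} (2j−q) u_j` and
`v_q = u_q − Σ_{j=1}^{q−2} ((−q+2+2j)/(q−2)) u_j` one has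
`P_q(u) = Q(v_{q−1}, v_q) + (q/(q−2)) P_{q−2}(u₁,…,u_{q−2})`. -/
theorem P_recursive_identity
    (m l : ℕ) (hm : 0 < m) (hl : 0 < l)
    (Q : ZS m →ₗ[ℝ] ZS m →ₗ[ℝ] TS l)
    (hskew : ∀ z ζ : ZS m, Q z ζ = - Q ζ z)
    (q : ℕ) (hq : 5 ≤ q) (hodd : Odd q)
    (u : Fin q → ZS m) :
    Pfun Q q u =
      Q (∑ j : Fin (q - 1),
          (2 * (((j : ℕ) : ℝ) + 1) - (q : ℝ)) • u (Fin.castLE (by omega) j))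
        (u ⟨q - 1, by omega⟩ -
          ∑ j : Fin (q - 2),
            ((-(q : ℝ) + 2 + 2 * (((j : ℕ) : ℝ) + 1)) / ((q : ℝ) - 2)) •
              u (Fin.castLE (by omega) j))
      + ((q : ℝ) / ((q : ℝ) - 2)) •
          Pfun Q (q - 2) (fun j => u (Fin.castLE (by omega) j)) :=
  P_recursive_identity_general (isAlt_of_forall_eq_neg (.mk0 2 two_ne_zero) hskew)
    (by omega) (by exact_mod_cast (show q ≠ 2 by omega)) u
end
end

section
/- Let E ⊆ ℝ⁴ = ℍ×ℝ be precisely monotone. Then the interior of the boundary ∂E is empty; equivalently, the open set Int(E) ∪ Int(ℝ⁴∖E) is dense in ℝ⁴. -/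
/- The group `ℍ×ℝ`: `ℝ⁴` with coordinates `(x,y,u,t)` and law
`(x,y,u,t)·(x',y',u',t') = (x+x', y+y', u+u', t+t'+2(yx'−y'x))`. -/

noncomputable section

/-- Group law of `ℍ×ℝ` on `ℝ⁴`. -/
def hmul (p q : Fin 4 → ℝ) : Fin 4 → ℝ :=
  ![p 0 + q 0, p 1 + q 1, p 2 + q 2, p 3 + q 3 + 2 * (p 1 * q 0 - q 1 * p 0)]

/-- Horizontal convexity in `ℍ×ℝ`. -/
def HRConvex (C : Set (Fin 4 → ℝ)) : Prop :=
  ∀ p ∈ C, ∀ a b c : ℝ, hmul p ![a, b, c, 0] ∈ C →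
    ∀ s : ℝ, 0 ≤ s → s ≤ 1 → hmul p ![s * a, s * b, s * c, 0] ∈ C

/-- Precise monotonicity in `ℍ×ℝ`. -/
def PreciselyMonotone (E : Set (Fin 4 → ℝ)) : Prop := HRConvex E ∧ HRConvex Eᶜ

/-!
In the Heisenberg group `ℍ`, let `F` be precisely monotone and contain a segment of the `x`-axis.
Every point off the plane `y = 0` lies on exactly one horizontal line that meets the `x`-axis;
record it by the foot `s` and slope `m` of that line together with `y`. In these coordinates, over
the given segment and for `y > 0`,

* the slices `A y = {(s, m) | (s, m, y) ∉ F}` increase with `y`, and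
* `A y` and its complement are convex along the lines of slope `-2 / y`.

If `(s, m) ∈ A y₀`, then for each `y ≥ y₀` one of the two rays of slope `-2 / y` from `(s, m)` lies
in `A y`. Two heights `y₁ < y₂` share the direction of their rays, so for `Y > y₂` both rays lie
locally in `A Y`, and convexity along the slope `-2 / Y` fills in the triangle between them. Hence
every such point outside `F` is a limit of interior points of `Fᶜ`, and `F` and `Fᶜ` cannot both be
dense near the segment. Among three points of the axis two lie in the same one of `F`, `Fᶜ`, so the
segment exists after possibly exchanging `F` and `Fᶜ`, and left translation moves it anywhere.

In `ℍ × ℝ`, a generic point of `ℍ` is interior to `E` or to `Eᶜ` within each of three slices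
`u = const`. Two of the slices agree, and convexity in the `u`-direction makes the points between
them interior to `E` or to `Eᶜ`.
-/

open Set Filter Topology

theorem disjoint_interior_frontier_closure_interior {X : Type*} [TopologicalSpace X] (s : Set X) :
    Disjoint (interior (frontier s)) (closure (interior s)) :=
  (disjoint_interior_frontier.symm.mono_left interior_subset).closure_right isOpen_interior

theorem exists_lt_and_iff_of_lt_of_lt {α : Type*} [Preorder α] (P : α → Prop) {a b c : α}
    (hab : a < b) (hbc : b < c) :
    ∃ x ∈ ({a, b, c} : Set α), ∃ y ∈ ({a, b, c} : Set α), x < y ∧ (P x ↔ P y) := by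
  by_cases ha : P a ↔ P b
  · exact ⟨a, by simp, b, by simp, hab, ha⟩
  by_cases hb : P b ↔ P c
  · exact ⟨b, by simp, c, by simp, hbc, hb⟩
  · exact ⟨a, by simp, c, by simp, hab.trans hbc, by tauto⟩

section Prod

variable {X Y : Type*} [TopologicalSpace X] [LinearOrder Y] [TopologicalSpace Y] {E : Set (X × Y)}

theorem mk_mem_interior_of_mem_interior_slices [OrderClosedTopology Y]
    (hE : ∀ x, {u | (x, u) ∈ E}.OrdConnected) {x : X} {u₁ u₂ u : Y}
    (h₁ : x ∈ interior {x | (x, u₁) ∈ E}) (h₂ : x ∈ interior {x | (x, u₂) ∈ E})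
    (hu : u ∈ Ioo u₁ u₂) : (x, u) ∈ interior E := by
  refine mem_interior.2 ⟨(interior {x | (x, u₁) ∈ E} ∩ interior {x | (x, u₂) ∈ E}) ×ˢ Ioo u₁ u₂,
    ?_, (isOpen_interior.inter isOpen_interior).prod isOpen_Ioo, ⟨h₁, h₂⟩, hu⟩
  rintro ⟨x', u'⟩ ⟨⟨h₁', h₂'⟩, hu'⟩
  have h₁E : x' ∈ {x | (x, u₁) ∈ E} := interior_subset h₁'
  have h₂E : x' ∈ {x | (x, u₂) ∈ E} := interior_subset h₂'
  exact (hE x').out h₁E h₂E (Ioo_subset_Icc_self hu')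

theorem mk_notMem_frontier_of_notMem_frontier_slices [OrderClosedTopology Y]
    (hE : ∀ x, {u | (x, u) ∈ E}.OrdConnected) (hE' : ∀ x, {u | (x, u) ∈ Eᶜ}.OrdConnected)
    {x : X} {u₁ u₂ u : Y} (h₁ : x ∉ frontier {x | (x, u₁) ∈ E})
    (h₂ : x ∉ frontier {x | (x, u₂) ∈ E})
    (hiff : x ∈ interior {x | (x, u₁) ∈ E} ↔ x ∈ interior {x | (x, u₂) ∈ E})
    (hu : u ∈ Ioo u₁ u₂) : (x, u) ∉ frontier E := by
  rw [← mem_compl_iff, compl_frontier_eq_union_interior] at h₁ h₂ ⊢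
  rcases h₁ with h₁ | h₁
  · exact .inl (mk_mem_interior_of_mem_interior_slices hE h₁ (hiff.1 h₁) hu)
  · have hnot : x ∉ interior {x | (x, u₁) ∈ E} := fun h ↦
      interior_subset h₁ (interior_subset h)
    exact .inr (mk_mem_interior_of_mem_interior_slices hE' h₁
      (h₂.resolve_left (hnot ∘ hiff.2)) hu)

theorem interior_frontier_eq_empty_of_slices [OrderTopology Y] [DenselyOrdered Y] [Nontrivial Y]
    (hE : ∀ x, {u | (x, u) ∈ E}.OrdConnected) (hE' : ∀ x, {u | (x, u) ∈ Eᶜ}.OrdConnected)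
    (hslice : ∀ u, interior (frontier {x | (x, u) ∈ E}) = ∅) : interior (frontier E) = ∅ := by
  refine eq_empty_iff_forall_notMem.2 fun ⟨x₀, u₀⟩ h₀ ↦ ?_
  obtain ⟨W, I, hW, hI, hx₀, hu₀, hWI⟩ := isOpen_prod_iff.1 isOpen_interior x₀ u₀ h₀
  obtain ⟨a, e, hae, haeI⟩ := hI.exists_Ioo_subset ⟨u₀, hu₀⟩
  obtain ⟨b, hab, hbe⟩ := exists_between hae
  obtain ⟨c, hbc, hce⟩ := exists_between hbe
  obtain ⟨d, hcd, hde⟩ := exists_between hce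
  have hdense (u : Y) : Dense (frontier {x | (x, u) ∈ E})ᶜ :=
    interior_eq_empty_iff_dense_compl.1 (hslice u)
  have hopen (u : Y) : IsOpen (frontier {x | (x, u) ∈ E})ᶜ := isClosed_frontier.isOpen_compl
  obtain ⟨x, hxW, hxb, hxc, hxd⟩ :=
    ((hdense b).inter_of_isOpen_left ((hdense c).inter_of_isOpen_left (hdense d) (hopen c))
      (hopen b)).inter_open_nonempty W hW ⟨x₀, hx₀⟩
  have hx : ∀ u ∈ ({b, c, d} : Set Y), u ∈ Ioo a e ∧ x ∉ frontier {x | (x, u) ∈ E} := by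
    rintro u (rfl | rfl | rfl) <;> exact ⟨⟨by order, by order⟩, ‹_›⟩
  obtain ⟨u₁, hu₁, u₂, hu₂, hlt, hiff⟩ :=
    exists_lt_and_iff_of_lt_of_lt (fun u ↦ x ∈ interior {x | (x, u) ∈ E}) hbc hcd
  obtain ⟨u, hu⟩ := exists_between hlt
  refine mk_notMem_frontier_of_notMem_frontier_slices hE hE' (hx u₁ hu₁).2 (hx u₂ hu₂).2 hiff hu
    (interior_subset (hWI ⟨hxW, haeI ⟨?_, ?_⟩⟩))
  · exact (hx u₁ hu₁).1.1.trans hu.1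
  · exact hu.2.trans (hx u₂ hu₂).1.2

end Prod

theorem eventually_add_smul_add_smul_mem {V : Type*} [AddCommGroup V] [Module ℝ V] {A : Set V}
    {q v w : V} (hA : ∀ p, {τ : ℝ | p + τ • (v - w) ∈ A}.OrdConnected)
    (hv : ∀ᶠ τ in 𝓝[≥] (0 : ℝ), q + τ • v ∈ A) (hw : ∀ᶠ τ in 𝓝[≥] (0 : ℝ), q + τ • w ∈ A) :
    ∀ᶠ c in 𝓝 (0 : ℝ × ℝ), 0 ≤ c.1 → 0 ≤ c.2 → q + (c.1 • v + c.2 • w) ∈ A := by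
  have hsum : Tendsto (fun c : ℝ × ℝ ↦ c.1 + c.2) (𝓝 0) (𝓝 0) :=
    Continuous.tendsto' (by fun_prop) _ _ (by simp)
  filter_upwards [hsum.eventually (eventually_nhdsWithin_iff.1 (hv.and hw))] with c hc h₁ h₂
  obtain ⟨hcv, hcw⟩ := hc (add_nonneg h₁ h₂)
  have hmem := (hA (q + (c.1 + c.2) • w)).out (x := 0) (y := c.1 + c.2)
    (by simpa using hcw) (by simpa [smul_sub, add_assoc] using hcv) ⟨h₁, by linarith⟩
  convert mem_ofPred.1 hmem using 1
  module

theorem isOpenMap_smul_add_smul {v w : ℝ × ℝ} (h : v.1 * w.2 - w.1 * v.2 ≠ 0) :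
    IsOpenMap fun c : ℝ × ℝ ↦ c.1 • v + c.2 • w := by
  refine LinearMap.isOpenMap_of_finiteDimensional
    ((LinearMap.toSpanSingleton ℝ (ℝ × ℝ) v).coprod (LinearMap.toSpanSingleton ℝ (ℝ × ℝ) w)) ?_
  intro z
  refine ⟨((z.1 * w.2 - w.1 * z.2) / (v.1 * w.2 - w.1 * v.2),
    (v.1 * z.2 - z.1 * v.2) / (v.1 * w.2 - w.1 * v.2)), ?_⟩
  ext <;> simp only [LinearMap.coprod_apply, LinearMap.toSpanSingleton_apply, Prod.fst_add,
    Prod.snd_add, Prod.smul_fst, Prod.smul_snd, smul_eq_mul,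
    div_mul_eq_mul_div, ← add_div, div_eq_iff h] <;> ring

section Heisenberg

/-- Group law of the first Heisenberg group `ℍ` on `ℝ³`, with coordinates `(x, y, t)`. -/
def heisMul (p q : ℝ × ℝ × ℝ) : ℝ × ℝ × ℝ :=
  (p.1 + q.1, p.2.1 + q.2.1, p.2.2 + q.2.2 + 2 * (p.2.1 * q.1 - q.2.1 * p.1))

/-- Horizontal convexity in `ℍ`, expressed by the traces of the set on all parametrized horizontal
lines. -/
def HeisConvex (F : Set (ℝ × ℝ × ℝ)) : Prop :=
  ∀ p : ℝ × ℝ × ℝ, ∀ a b : ℝ, {τ : ℝ | heisMul p (τ * a, τ * b, 0) ∈ F}.OrdConnected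

/-- Precise monotonicity in `ℍ`. -/
def HeisMonotone (F : Set (ℝ × ℝ × ℝ)) : Prop := HeisConvex F ∧ HeisConvex Fᶜ

/-- Left translation of `ℍ` by `p`. -/
@[simps]
def heisTranslation (p : ℝ × ℝ × ℝ) : (ℝ × ℝ × ℝ) ≃ₜ (ℝ × ℝ × ℝ) where
  toFun := heisMul p
  invFun := heisMul (-p)
  left_inv z := by ext <;> simp [heisMul]; ring
  right_inv z := by ext <;> simp [heisMul]; ring
  continuous_toFun := by unfold heisMul; fun_prop
  continuous_invFun := by unfold heisMul; fun_prop

/-- The point at height `y` on the horizontal line through `(s, 0, 0)` with direction `(m, 1)`,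
where `p = (s, m)`. -/
def transversal (p : ℝ × ℝ) (y : ℝ) : ℝ × ℝ × ℝ := (p.1 + p.2 * y, y, -2 * y * p.1)

/-- The foot, slope and height of the horizontal line that joins a point with `y ≠ 0` to the
`x`-axis: the inverse of `transversal`. -/
def transversalCoords (z : ℝ × ℝ × ℝ) : (ℝ × ℝ) × ℝ :=
  ((-z.2.2 / (2 * z.2.1), (z.1 + z.2.2 / (2 * z.2.1)) / z.2.1), z.2.1)

variable {F : Set (ℝ × ℝ × ℝ)} {p : ℝ × ℝ} {y Y : ℝ}

theorem heisMul_assoc (p q r : ℝ × ℝ × ℝ) :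
    heisMul (heisMul p q) r = heisMul p (heisMul q r) := by
  ext <;> simp [heisMul] <;> ring

theorem HeisConvex.preimage_heisTranslation (hF : HeisConvex F) (p : ℝ × ℝ × ℝ) :
    HeisConvex (heisTranslation p ⁻¹' F) := fun q a b ↦ by
  simpa only [mem_preimage, heisTranslation_apply, heisMul_assoc] using hF (heisMul p q) a b

theorem HeisMonotone.preimage_heisTranslation (hF : HeisMonotone F) (p : ℝ × ℝ × ℝ) :
    HeisMonotone (heisTranslation p ⁻¹' F) :=
  ⟨hF.1.preimage_heisTranslation p, hF.2.preimage_heisTranslation p⟩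

theorem HeisMonotone.compl (hF : HeisMonotone F) : HeisMonotone Fᶜ :=
  ⟨hF.2, by rw [compl_compl]; exact hF.1⟩

theorem continuous_transversal : Continuous fun w : (ℝ × ℝ) × ℝ ↦ transversal w.1 w.2 := by
  unfold transversal
  fun_prop

theorem continuous_transversal_right (p : ℝ × ℝ) : Continuous (transversal p) :=
  continuous_transversal.comp (Continuous.prodMk_right p)

theorem transversal_transversalCoords {z : ℝ × ℝ × ℝ} (hz : z.2.1 ≠ 0) :
    transversal (transversalCoords z).1 (transversalCoords z).2 = z := by
  ext <;> simp only [transversal, transversalCoords] <;> field_simp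
  ring

theorem transversalCoords_transversal (p : ℝ × ℝ) (hy : y ≠ 0) :
    transversalCoords (transversal p y) = (p, y) := by
  ext <;> simp only [transversal, transversalCoords] <;> field_simp
  ring

theorem continuousAt_transversalCoords {z : ℝ × ℝ × ℝ} (hz : z.2.1 ≠ 0) :
    ContinuousAt transversalCoords z := by
  have hz' : 2 * z.2.1 ≠ 0 := mul_ne_zero two_ne_zero hz
  unfold transversalCoords
  fun_prop (disch := assumption)

theorem tendsto_transversalCoords (p : ℝ × ℝ) (hy : y ≠ 0) :
    Tendsto transversalCoords (𝓝 (transversal p y)) (𝓝 (p, y)) := by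
  rw [← transversalCoords_transversal p hy]
  exact continuousAt_transversalCoords hy

theorem mem_nhds_transversal_of_eventually (hy : y ≠ 0)
    (h : ∀ᶠ w in 𝓝 (p, y), transversal w.1 w.2 ∈ F) : F ∈ 𝓝 (transversal p y) := by
  have hne : ∀ᶠ z : ℝ × ℝ × ℝ in 𝓝 (transversal p y), z.2.1 ≠ 0 :=
    ContinuousAt.eventually_ne (by fun_prop) hy
  filter_upwards [(tendsto_transversalCoords p hy).eventually h, hne] with z hz hz'
  rwa [transversal_transversalCoords hz'] at hz

theorem HeisConvex.ordConnected_axis (hF : HeisConvex F) :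
    {s : ℝ | (s, (0 : ℝ), (0 : ℝ)) ∈ F}.OrdConnected := by
  simpa [heisMul] using hF 0 1 0

theorem HeisConvex.ordConnected_transversal (hF : HeisConvex F) (p : ℝ × ℝ) :
    {y | transversal p y ∈ F}.OrdConnected := by
  have hline (y : ℝ) : heisMul (p.1, 0, 0) (y * p.2, y * 1, 0) = transversal p y := by
    ext <;> simp [heisMul, transversal] <;> ring
  simpa only [hline] using hF (p.1, 0, 0) p.2 1

theorem HeisConvex.ordConnected_slice (hF : HeisConvex F) (p : ℝ × ℝ) {v : ℝ × ℝ}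
    (hv : v.2 * y = -2 * v.1) : {τ : ℝ | transversal (p + τ • v) y ∈ F}.OrdConnected := by
  have hline (τ : ℝ) :
      heisMul (transversal p y) (τ * -v.1, τ * 0, 0) = transversal (p + τ • v) y := by
    ext <;> simp only [heisMul, transversal, Prod.fst_add, Prod.snd_add, Prod.smul_fst,
      Prod.smul_snd, smul_eq_mul]
    · linear_combination -τ * hv
    · ring
    · ring
  simpa only [hline] using hF (transversal p y) (-v.1) 0

theorem HeisConvex.transversal_notMem_of_le (hF : HeisConvex F) (hp : (p.1, 0, 0) ∈ F)
    (hy : 0 ≤ y) (hyY : y ≤ Y) (h : transversal p y ∉ F) : transversal p Y ∉ F := fun hY ↦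
  h <| (hF.ordConnected_transversal p).out (x := 0) (by simpa [transversal] using hp) hY ⟨hy, hyY⟩

theorem HeisConvex.exists_ray_notMem (hF : HeisConvex F) (h : transversal p y ∉ F) :
    ∃ ε ∈ ({1, -1} : Set ℝ), ∀ τ : ℝ, 0 ≤ τ → transversal (p + τ • ε • (y, (-2 : ℝ))) y ∉ F := by
  by_contra! hF'
  obtain ⟨σ, hσ, hσF⟩ := hF' 1 (by simp)
  obtain ⟨τ, hτ, hτF⟩ := hF' (-1) (by simp)
  have hslice := hF.ordConnected_slice p (v := (y, -2)) (y := y) rfl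
  have h0 := hslice.out (x := -τ) (y := σ) (by simpa using hτF) (by simpa using hσF)
    ⟨by linarith, hσ⟩
  exact h (by simpa only [mem_ofPred, zero_smul, add_zero] using h0)

theorem HeisConvex.exists_lt_rays_notMem (hF : HeisConvex F) (hp : (p.1, 0, 0) ∈ F)
    (hy : 0 ≤ y) (hyY : y < Y) (h : transversal p y ∉ F) :
    ∃ y₁ ∈ Ioo y Y, ∃ y₂ ∈ Ioo y Y, y₁ < y₂ ∧ ∃ ε : ℝ, ε ≠ 0 ∧
      (∀ τ : ℝ, 0 ≤ τ → transversal (p + τ • ε • (y₁, (-2 : ℝ))) y₁ ∉ F) ∧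
      ∀ τ : ℝ, 0 ≤ τ → transversal (p + τ • ε • (y₂, (-2 : ℝ))) y₂ ∉ F := by
  have hray (η : ℝ) (hη : η ∈ Ioo y Y) :=
    hF.exists_ray_notMem (hF.transversal_notMem_of_le hp hy hη.1.le h)
  choose! ε hε hεF using hray
  obtain ⟨y₁, hy₁, y₂, hy₂, hlt, heq⟩ :=
    (Ioo_infinite hyY).exists_lt_map_eq_of_mapsTo hε (toFinite _)
  have hne : ε y₁ ≠ 0 := by rcases hε y₁ hy₁ with h | h <;> rw [h] <;> norm_num
  exact ⟨y₁, hy₁, y₂, hy₂, hlt, ε y₁, hne, hεF y₁ hy₁, heq ▸ hεF y₂ hy₂⟩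

theorem HeisConvex.eventually_ray_notMem_of_le (hF : HeisConvex F)
    (hp : ∀ᶠ s in 𝓝 p.1, (s, (0 : ℝ), (0 : ℝ)) ∈ F) (hy : 0 ≤ y) (hyY : y ≤ Y) {v : ℝ × ℝ}
    (hv : ∀ τ : ℝ, 0 ≤ τ → transversal (p + τ • v) y ∉ F) :
    ∀ᶠ τ in 𝓝[≥] (0 : ℝ), transversal (p + τ • v) Y ∉ F := by
  have hfoot : Tendsto (fun τ : ℝ ↦ (p + τ • v).1) (𝓝 0) (𝓝 p.1) :=
    Continuous.tendsto' (by fun_prop) _ _ (by simp)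
  filter_upwards [nhdsWithin_le_nhds (hfoot.eventually hp), self_mem_nhdsWithin] with τ hτF hτ
  exact hF.transversal_notMem_of_le hτF hy hyY (hv τ hτ)

-- The factors `1 / (Y - yᵢ)` make `v - w` a multiple of `(Y, -2)`, the direction of the horizontal
-- lines at height `Y`.
theorem HeisMonotone.exists_eventually_triangle_notMem (hF : HeisMonotone F)
    (hp : ∀ᶠ s in 𝓝 p.1, (s, (0 : ℝ), (0 : ℝ)) ∈ F) (hy : 0 ≤ y) (hyY : y < Y)
    (h : transversal p y ∉ F) :
    ∃ v w : ℝ × ℝ, v.1 * w.2 - w.1 * v.2 ≠ 0 ∧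
      ∀ᶠ c in 𝓝 (0 : ℝ × ℝ), 0 ≤ c.1 → 0 ≤ c.2 →
        transversal (p + (c.1 • v + c.2 • w)) Y ∉ F := by
  obtain ⟨y₁, ⟨hy₁, hy₁Y⟩, y₂, ⟨hy₂, hy₂Y⟩, hlt, ε, hε, hray₁, hray₂⟩ :=
    hF.1.exists_lt_rays_notMem hp.self_of_nhds hy hyY h
  have hY₁ : 0 < Y - y₁ := sub_pos.2 hy₁Y
  have hY₂ : 0 < Y - y₂ := sub_pos.2 hy₂Y
  refine ⟨(1 / (Y - y₁)) • ε • (y₁, -2), (1 / (Y - y₂)) • ε • (y₂, -2), ?_, ?_⟩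
  · have hdet : ε ^ 2 * (2 * (y₂ - y₁)) / ((Y - y₁) * (Y - y₂)) ≠ 0 := by
      have := sub_pos.2 hlt
      positivity
    convert hdet using 1
    simp only [Prod.smul_mk, smul_eq_mul]
    field_simp
    ring
  · refine eventually_add_smul_add_smul_mem (A := {q | transversal q Y ∉ F})
      (fun q ↦ hF.2.ordConnected_slice q ?_)
      (hF.1.eventually_ray_notMem_of_le hp (hy.trans hy₁.le) hy₁Y.le fun τ hτ ↦ ?_)
      (hF.1.eventually_ray_notMem_of_le hp (hy.trans hy₂.le) hy₂Y.le fun τ hτ ↦ ?_)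
    · simp only [Prod.smul_mk, smul_eq_mul, Prod.mk_sub_mk]
      field_simp
      ring
    · rw [smul_smul]
      exact hray₁ _ (mul_nonneg hτ (one_div_pos.2 hY₁).le)
    · rw [smul_smul]
      exact hray₂ _ (mul_nonneg hτ (one_div_pos.2 hY₂).le)

theorem HeisMonotone.exists_eventually_triangle_mem_interior_compl (hF : HeisMonotone F)
    (hp : ∀ᶠ s in 𝓝 p.1, (s, (0 : ℝ), (0 : ℝ)) ∈ F) (hy : 0 ≤ y) (hyY : y < Y)
    (h : transversal p y ∉ F) :
    ∃ v w : ℝ × ℝ, ∀ᶠ c in 𝓝 (0 : ℝ × ℝ), 0 < c.1 → 0 < c.2 →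
      transversal (p + (c.1 • v + c.2 • w)) Y ∈ interior Fᶜ := by
  obtain ⟨η, hyη, hηY⟩ := exists_between hyY
  have hη : 0 ≤ η := hy.trans hyη.le
  obtain ⟨v, w, hvw, htriangle⟩ := hF.exists_eventually_triangle_notMem hp hy hyη h
  have hopen : IsOpenMap fun c : ℝ × ℝ ↦ p + (c.1 • v + c.2 • w) :=
    (isOpenMap_add_left p).comp (isOpenMap_smul_add_smul hvw)
  have hfoot : Tendsto (fun c : ℝ × ℝ ↦ (p + (c.1 • v + c.2 • w)).1) (𝓝 0) (𝓝 p.1) :=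
    Continuous.tendsto' (by fun_prop) _ _ (by simp)
  refine ⟨v, w, ?_⟩
  filter_upwards [(htriangle.and (hfoot.eventually hp)).eventually_nhds] with c hc h₁ h₂
  have hpos : ∀ᶠ c' in 𝓝 c, 0 < c'.1 ∧ 0 < c'.2 :=
    (continuous_fst.continuousAt.eventually_const_lt h₁).and
      (continuous_snd.continuousAt.eventually_const_lt h₂)
  have himage : ∀ᶠ q in 𝓝 (p + (c.1 • v + c.2 • w)), ∀ Y' ≥ η, transversal q Y' ∉ F := by
    refine mem_of_superset (hopen.image_mem_nhds (hc.and hpos)) ?_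
    rintro _ ⟨c', ⟨⟨htri, haxis⟩, h₁', h₂'⟩, rfl⟩ Y' hY'
    exact hF.1.transversal_notMem_of_le haxis hη hY' (htri h₁'.le h₂'.le)
  refine mem_interior_iff_mem_nhds.2 (mem_nhds_transversal_of_eventually (hη.trans_lt hηY).ne' ?_)
  filter_upwards [himage.prod_nhds (eventually_ge_nhds hηY)] with z hz
  exact hz.1 _ hz.2

theorem HeisMonotone.transversal_mem_closure_interior_compl_of_lt (hF : HeisMonotone F)
    (hp : ∀ᶠ s in 𝓝 p.1, (s, (0 : ℝ), (0 : ℝ)) ∈ F) (hy : 0 ≤ y) (hyY : y < Y)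
    (h : transversal p y ∉ F) : transversal p Y ∈ closure (interior Fᶜ) := by
  obtain ⟨v, w, htriangle⟩ := hF.exists_eventually_triangle_mem_interior_compl hp hy hyY h
  have hdiag : Tendsto (fun τ : ℝ ↦ (τ, τ)) (𝓝[>] 0) (𝓝 (0 : ℝ × ℝ)) :=
    (Continuous.tendsto' (by fun_prop) _ _ rfl).mono_left nhdsWithin_le_nhds
  have hlim : Tendsto (fun c : ℝ × ℝ ↦ transversal (p + (c.1 • v + c.2 • w)) Y) (𝓝 0)
      (𝓝 (transversal p Y)) :=
    (continuous_transversal.comp (g := fun z : (ℝ × ℝ) × ℝ ↦ transversal z.1 z.2)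
      (f := fun c : ℝ × ℝ ↦ (p + (c.1 • v + c.2 • w), Y)) (by fun_prop)).tendsto' _ _ (by simp)
  refine mem_closure_of_tendsto (hlim.comp hdiag) ?_
  filter_upwards [hdiag.eventually htriangle, self_mem_nhdsWithin] with τ hτF hτ
  exact hτF hτ hτ

theorem HeisMonotone.transversal_mem_closure_interior_compl (hF : HeisMonotone F)
    (hp : ∀ᶠ s in 𝓝 p.1, (s, (0 : ℝ), (0 : ℝ)) ∈ F) (hy : 0 ≤ y) (h : transversal p y ∉ F) :
    transversal p y ∈ closure (interior Fᶜ) := by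
  have habove : MapsTo (transversal p) (Ioi y) (closure (interior Fᶜ)) := fun Y hyY ↦
    hF.transversal_mem_closure_interior_compl_of_lt hp hy hyY h
  refine habove.closure_left (continuous_transversal_right p) isClosed_closure ?_
  rw [closure_Ioi]
  exact self_mem_Ici

theorem HeisMonotone.axis_notMem_interior_frontier (hF : HeisMonotone F) {s : ℝ}
    (hs : ∀ᶠ s' in 𝓝 s, (s', (0 : ℝ), (0 : ℝ)) ∈ F) : (s, 0, 0) ∉ interior (frontier F) := by
  intro h
  have hnear : ∀ᶠ y in 𝓝[>] 0, transversal (s, 0) y ∈ interior (frontier F) :=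
    nhdsWithin_le_nhds <| ((continuous_transversal_right (s, 0)).tendsto' 0 (s, 0, 0)
      (by simp [transversal])).eventually (isOpen_interior.mem_nhds h)
  obtain ⟨y, hyF, hy : 0 < y⟩ := (hnear.and self_mem_nhdsWithin).exists
  have hyfrontier := interior_subset hyF
  rw [frontier_eq_closure_inter_closure] at hyfrontier
  have hcompl : ∃ᶠ z in 𝓝 (transversal (s, 0) y), z ∈ Fᶜ :=
    mem_closure_iff_frequently.1 hyfrontier.2
  have hpos : ∀ᶠ z : ℝ × ℝ × ℝ in 𝓝 (transversal (s, 0) y), 0 < z.2.1 :=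
    Tendsto.eventually_const_lt hy (Continuous.tendsto (by fun_prop) _)
  have hfoot : ∀ᶠ z in 𝓝 (transversal (s, 0) y),
      ∀ᶠ s' in 𝓝 (transversalCoords z).1.1, (s', (0 : ℝ), (0 : ℝ)) ∈ F :=
    (tendsto_transversalCoords (s, 0) hy.ne').fst_nhds.fst_nhds.eventually hs.eventually_nhds
  obtain ⟨z, hzF, hz, hzpos, hzfoot⟩ := (hcompl.and_eventually
    ((isOpen_interior.eventually_mem hyF).and (hpos.and hfoot))).exists
  have hz' := transversal_transversalCoords hzpos.ne'
  have hclosure := hF.transversal_mem_closure_interior_compl hzfoot hzpos.le (hz'.symm ▸ hzF)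
  rw [← frontier_compl] at hz
  exact (disjoint_interior_frontier_closure_interior Fᶜ).notMem_of_mem_left hz (hz' ▸ hclosure)

theorem HeisMonotone.zero_notMem_interior_frontier (hF : HeisMonotone F) :
    (0, 0, 0) ∉ interior (frontier F) := by
  intro h
  have haxis : IsOpen {s : ℝ | (s, (0 : ℝ), (0 : ℝ)) ∈ interior (frontier F)} :=
    isOpen_interior.preimage (by fun_prop)
  obtain ⟨a, b, hab, hsub⟩ := haxis.exists_Ioo_subset ⟨0, h⟩
  obtain ⟨s₁, hs₁, s₂, hs₂, hlt, heq⟩ := (Ioo_infinite hab).exists_lt_map_eq_of_mapsTo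
    (f := fun s : ℝ ↦ (s, (0 : ℝ), (0 : ℝ)) ∈ F) (mapsTo_univ _ _) (toFinite univ)
  obtain ⟨s, hs⟩ := exists_between hlt
  have hsF : (s, 0, 0) ∈ interior (frontier F) := hsub ⟨hs₁.1.trans hs.1, hs.2.trans hs₂.2⟩
  have hseg {G : Set (ℝ × ℝ × ℝ)} (hG : HeisConvex G) (h₁ : (s₁, 0, 0) ∈ G)
      (h₂ : (s₂, 0, 0) ∈ G) : ∀ᶠ s' in 𝓝 s, (s', (0 : ℝ), (0 : ℝ)) ∈ G :=
    mem_of_superset (Icc_mem_nhds hs.1 hs.2) (hG.ordConnected_axis.out h₁ h₂)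
  by_cases h₁ : (s₁, 0, 0) ∈ F
  · exact hF.axis_notMem_interior_frontier (hseg hF.1 h₁ (heq.mp h₁)) hsF
  · refine hF.compl.axis_notMem_interior_frontier (hseg hF.2 h₁ fun h₂ ↦ h₁ (heq.mpr h₂)) ?_
    rwa [frontier_compl]

theorem HeisMonotone.interior_frontier_eq_empty (hF : HeisMonotone F) :
    interior (frontier F) = ∅ := by
  refine eq_empty_iff_forall_notMem.2 fun p hp ↦
    (hF.preimage_heisTranslation p).zero_notMem_interior_frontier ?_
  rw [← Homeomorph.preimage_frontier, ← Homeomorph.preimage_interior, mem_preimage]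
  simpa [heisMul] using hp

end Heisenberg

theorem HRConvex.ordConnected_line {C : Set (Fin 4 → ℝ)} (hC : HRConvex C) (p : Fin 4 → ℝ)
    (a b c : ℝ) : {τ : ℝ | hmul p ![τ * a, τ * b, τ * c, 0] ∈ C}.OrdConnected := by
  have hadd (σ τ : ℝ) : hmul (hmul p ![σ * a, σ * b, σ * c, 0]) ![τ * a, τ * b, τ * c, 0] =
      hmul p ![(σ + τ) * a, (σ + τ) * b, (σ + τ) * c, 0] := by
    ext i
    fin_cases i <;> simp [hmul] <;> ring
  refine ⟨fun σ hσ τ hτ ρ hρ ↦ ?_⟩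
  rw [← segment_eq_Icc (hρ.1.trans hρ.2), segment_eq_image'] at hρ
  obtain ⟨θ, ⟨hθ₀, hθ₁⟩, rfl⟩ := hρ
  have hmem := hC _ hσ ((τ - σ) * a) ((τ - σ) * b) ((τ - σ) * c)
    (by rw [hadd, add_sub_cancel]; exact hτ) θ hθ₀ hθ₁
  simp only [← mul_assoc, hadd] at hmem
  exact hmem

/-- The identification of `ℍ × ℝ`, as a product of spaces, with `ℝ⁴` in the coordinate order
`(x, y, u, t)`. -/
def heisProdHomeomorph : (ℝ × ℝ × ℝ) × ℝ ≃ₜ (Fin 4 → ℝ) where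
  toFun w := ![w.1.1, w.1.2.1, w.2, w.1.2.2]
  invFun q := ((q 0, q 1, q 3), q 2)
  left_inv _ := rfl
  right_inv q := by ext i; fin_cases i <;> rfl
  continuous_toFun := by fun_prop
  continuous_invFun := by fun_prop

theorem heisProdHomeomorph_apply (w : (ℝ × ℝ × ℝ) × ℝ) :
    heisProdHomeomorph w = ![w.1.1, w.1.2.1, w.2, w.1.2.2] := rfl

theorem HRConvex.heisConvex_slice {C : Set (Fin 4 → ℝ)} (hC : HRConvex C) (u : ℝ) :
    HeisConvex {z | heisProdHomeomorph (z, u) ∈ C} := fun p a b ↦ by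
  simpa [heisProdHomeomorph_apply, hmul, heisMul] using
    hC.ordConnected_line (heisProdHomeomorph (p, u)) a b 0

theorem HRConvex.ordConnected_fiber {C : Set (Fin 4 → ℝ)} (hC : HRConvex C) (z : ℝ × ℝ × ℝ) :
    {u | heisProdHomeomorph (z, u) ∈ C}.OrdConnected := by
  simpa [heisProdHomeomorph_apply, hmul] using
    hC.ordConnected_line (heisProdHomeomorph (z, 0)) 0 0 1

/-- The boundary of a precisely monotone set in `ℍ×ℝ` has empty interior;
equivalently `Int(E) ∪ Int(Eᶜ)` is dense. -/
theorem monotone_boundary_empty_interior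
    (E : Set (Fin 4 → ℝ)) (hE : PreciselyMonotone E) :
    interior (frontier E) = ∅ := by
  have hpreimage : interior (frontier (heisProdHomeomorph ⁻¹' E)) = ∅ :=
    interior_frontier_eq_empty_of_slices hE.1.ordConnected_fiber hE.2.ordConnected_fiber fun u ↦
      HeisMonotone.interior_frontier_eq_empty
        ⟨hE.1.heisConvex_slice u, hE.2.heisConvex_slice u⟩
  rwa [← Homeomorph.preimage_frontier, ← Homeomorph.preimage_interior,
    preimage_eq_empty_iff, heisProdHomeomorph.range_coe, disjoint_univ] at hpreimage
end
end
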